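/- arXiv:1402.2936 — 7 statements merged into one kernel-verified Lean document; each statement's English description precedes it below -/
import Mathlib

section
/- Let A ∈ ℂ^{M×d}, let Φ = diag(e^{iμ_1},…,e^{iμ_d}) and Ψ = diag(e^{iφ_1},…,e^{iφ_d}) with all μ_i, φ_i real, and let J_1, J_2 be real M'×M matrices satisfying the shift invariance relation J_1·A·Φ = J_2·A. Then the augmented steering matrix A^{nc} = [A ; Π_M·conj(A)·conj(Ψ)·conj(Ψ)] ∈ ℂ^{2M×d} (vertical block stacking) satisfies the augmented shift invariance relation J_1^{nc}·A^{nc}·Φ = J_2^{nc}·A^{nc}, where J_1^{nc} = blkdiag(J_1, Π_{M'}·J_2·Π_M) and J_2^{nc} = blkdiag(J_2, Π_{M'}·J_1·Π_M) are the 2M'×2M block-diagonal augmented selection matrices. -/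
/-! Entrywise conjugation fixes the real selection matrices and inverts the diagonal phase matrix
`Φ`, so conjugating `J₁ A Φ = J₂ A` gives `J₂ conj(A) Φ = J₁ conj(A)`: the roles of `J₁` and `J₂`
are exchanged. The factors `conj(Ψ)` commute with `Φ`, and the exchange matrices cancel because
`Π_M ^ 2 = 1`, which makes this the lower block row of the augmented relation. -/

open Matrix Complex

/-- The `n × n` exchange matrix with ones on the antidiagonal and zeros elsewhere. -/
def exchg (R : Type*) [Zero R] [One R] (n : ℕ) : Matrix (Fin n) (Fin n) R :=
  Matrix.of fun i j => if (i : ℕ) + (j : ℕ) = n - 1 then (1 : R) else 0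

/-- The shift invariance relation between the two subarrays that `J₁` and `J₂` select from the
array with steering matrix `A`: passing from the first to the second multiplies by `Φ`. -/
def ShiftInvariant {R k m n : Type*} [Semiring R] [Fintype m] [Fintype n]
    (J₁ J₂ : Matrix k m R) (A : Matrix m n R) (Φ : Matrix n n R) : Prop :=
  J₁ * A * Φ = J₂ * A

namespace ShiftInvariant

variable {R k l m n p : Type*} [Semiring R] [Fintype m] [Fintype n]
  {J₁ J₂ : Matrix k m R} {A : Matrix m n R} {Φ : Matrix n n R}

theorem map {S : Type*} [Semiring S] (h : ShiftInvariant J₁ J₂ A Φ) (σ : R →+* S) :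
    ShiftInvariant (J₁.map σ) (J₂.map σ) (A.map σ) (Φ.map σ) := by
  simpa only [ShiftInvariant, Matrix.map_mul] using congrArg (Matrix.map · σ) h

theorem swap [DecidableEq n] {Φ' : Matrix n n R} (h : ShiftInvariant J₁ J₂ A Φ)
    (hΦ : Φ * Φ' = 1) : ShiftInvariant J₂ J₁ A Φ' :=
  calc
    J₂ * A * Φ' = J₁ * A * Φ * Φ' := by rw [h]
    _ = J₁ * A := by rw [Matrix.mul_assoc, hΦ, Matrix.mul_one]

theorem mul_right [Fintype p] {D : Matrix n p R} {Φ' : Matrix p p R}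
    (h : ShiftInvariant J₁ J₂ A Φ) (hD : Φ * D = D * Φ') :
    ShiftInvariant J₁ J₂ (A * D) Φ' :=
  calc
    J₁ * (A * D) * Φ' = J₁ * A * (D * Φ') := by simp only [Matrix.mul_assoc]
    _ = J₁ * A * Φ * D := by rw [← hD, Matrix.mul_assoc _ Φ]
    _ = J₂ * (A * D) := by rw [h, Matrix.mul_assoc]

theorem mul_left [Fintype k] [Fintype p] [DecidableEq m] {Q' : Matrix m p R} {Q : Matrix p m R}
    (h : ShiftInvariant J₁ J₂ A Φ) (P : Matrix l k R) (hQ : Q' * Q = 1) :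
    ShiftInvariant (P * J₁ * Q') (P * J₂ * Q') (Q * A) Φ := by
  have cancel (J : Matrix k m R) : P * J * Q' * (Q * A) = P * (J * A) := by
    rw [Matrix.mul_assoc, ← Matrix.mul_assoc Q', hQ, Matrix.one_mul, Matrix.mul_assoc]
  rw [ShiftInvariant, cancel, cancel, Matrix.mul_assoc, h]

theorem fromRows [Fintype p] {K₁ K₂ : Matrix l p R} {B : Matrix p n R}
    (hA : ShiftInvariant J₁ J₂ A Φ) (hB : ShiftInvariant K₁ K₂ B Φ) :
    ShiftInvariant (fromBlocks J₁ 0 0 K₁) (fromBlocks J₂ 0 0 K₂) (Matrix.fromRows A B) Φ := by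
  simp only [ShiftInvariant, fromBlocks_mul_fromRows, fromRows_mul, Matrix.zero_mul, add_zero,
    zero_add] at hA hB ⊢
  rw [hA, hB]

end ShiftInvariant

theorem augmented_shift_invariance_general {R k l m n p : Type*} [Semiring R]
    [Fintype k] [Fintype m] [Fintype n] [Fintype p] [DecidableEq m] [DecidableEq n]
    {J₁ J₂ : Matrix k m R} {A : Matrix m n R} {Φ Ψ : Matrix n n R} (σ : R →+* R)
    (P : Matrix l k R) {Q' : Matrix m p R} {Q : Matrix p m R}
    (hJ₁ : J₁.map σ = J₁) (hJ₂ : J₂.map σ = J₂) (hΦ : Φ.map σ * Φ = 1)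
    (hΨ : Commute Φ (Ψ.map σ)) (hQ : Q' * Q = 1) (hshift : ShiftInvariant J₁ J₂ A Φ) :
    ShiftInvariant (fromBlocks J₁ 0 0 (P * J₂ * Q')) (fromBlocks J₂ 0 0 (P * J₁ * Q'))
      (fromRows A (Q * A.map σ * Ψ.map σ * Ψ.map σ)) Φ := by
  have hconj : ShiftInvariant J₁ J₂ (A.map σ) (Φ.map σ) := by
    simpa only [hJ₁, hJ₂] using hshift.map σ
  have hswap : ShiftInvariant J₂ J₁ (A.map σ) Φ := hconj.swap hΦ
  exact hshift.fromRows (((hswap.mul_left P hQ).mul_right hΨ.eq).mul_right hΨ.eq)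

theorem exchg_eq_permMatrix (R : Type*) [Zero R] [One R] (n : ℕ) :
    exchg R n = (Fin.revPerm : Equiv.Perm (Fin n)).permMatrix R := by
  ext i j
  have hrev : (i : ℕ) + j = n - 1 ↔ Fin.rev i = j := by
    rw [Fin.ext_iff, Fin.val_rev]
    omega
  simp only [exchg, of_apply, hrev, Equiv.Perm.permMatrix, Equiv.toPEquiv_apply,
    PEquiv.toMatrix_apply, Fin.revPerm_apply, Option.mem_some_iff]

theorem exchg_mul_self (R : Type*) [NonAssocSemiring R] (n : ℕ) : exchg R n * exchg R n = 1 := by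
  have hrev : (Fin.revPerm * Fin.revPerm : Equiv.Perm (Fin n)) = 1 := Equiv.ext Fin.rev_rev
  rw [exchg_eq_permMatrix, ← permMatrix_mul, hrev, permMatrix_one]

theorem map_ofReal_map_conj {m n : Type*} (J : Matrix m n ℝ) :
    (J.map ofReal).map (starRingEnd ℂ) = J.map ofReal := by
  ext i j
  exact conj_ofReal (J i j)

theorem diagonal_exp_map_conj_mul_self {n : Type*} [Fintype n] [DecidableEq n] (μ : n → ℝ) :
    (diagonal fun i => exp (I * (μ i : ℂ))).map (starRingEnd ℂ) *
      (diagonal fun i => exp (I * (μ i : ℂ))) = 1 := by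
  rw [diagonal_map (map_zero _), diagonal_mul_diagonal, diagonal_eq_one]
  funext i
  simp [conj_mul', norm_exp_I_mul_ofReal]

theorem commute_diagonal_diagonal_map {R n : Type*} [CommSemiring R] [Fintype n] [DecidableEq n]
    (σ : R →+* R) (u v : n → R) : Commute (diagonal u) ((diagonal v).map σ) := by
  rw [diagonal_map (map_zero σ)]
  exact commute_diagonal _ _

/-- if `J₁ A Φ = J₂ A` (shift invariance), then the augmented steering
matrix `A^{nc} = [A ; Π_M conj(A) conj(Ψ) conj(Ψ)]` satisfies the augmented shift
invariance `J₁^{nc} A^{nc} Φ = J₂^{nc} A^{nc}` with block-diagonal augmented selection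
matrices `J₁^{nc} = blkdiag(J₁, Π_{M'} J₂ Π_M)`, `J₂^{nc} = blkdiag(J₂, Π_{M'} J₁ Π_M)`. -/
theorem augmented_shift_invariance
    (M M' d : ℕ) (A : Matrix (Fin M) (Fin d) ℂ)
    (μ φ : Fin d → ℝ)
    (J₁ J₂ : Matrix (Fin M') (Fin M) ℝ)
    (Φ Ψ : Matrix (Fin d) (Fin d) ℂ)
    (hΦ : Φ = Matrix.diagonal fun i => Complex.exp (Complex.I * (μ i : ℂ)))
    (hΨ : Ψ = Matrix.diagonal fun i => Complex.exp (Complex.I * (φ i : ℂ)))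
    (hshift : (J₁.map Complex.ofReal) * A * Φ = (J₂.map Complex.ofReal) * A)
    (Anc : Matrix (Fin M ⊕ Fin M) (Fin d) ℂ)
    (hAnc : Anc = Matrix.fromRows A
      (exchg ℂ M * A.map (starRingEnd ℂ) * Ψ.map (starRingEnd ℂ) * Ψ.map (starRingEnd ℂ)))
    (J₁nc J₂nc : Matrix (Fin M' ⊕ Fin M') (Fin M ⊕ Fin M) ℂ)
    (hJ₁nc : J₁nc = Matrix.fromBlocks (J₁.map Complex.ofReal) 0 0
      (exchg ℂ M' * (J₂.map Complex.ofReal) * exchg ℂ M))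
    (hJ₂nc : J₂nc = Matrix.fromBlocks (J₂.map Complex.ofReal) 0 0
      (exchg ℂ M' * (J₁.map Complex.ofReal) * exchg ℂ M)) :
    J₁nc * Anc * Φ = J₂nc * Anc := by
  subst hΦ hΨ hAnc hJ₁nc hJ₂nc
  exact augmented_shift_invariance_general (starRingEnd ℂ) (exchg ℂ M') (map_ofReal_map_conj J₁)
    (map_ofReal_map_conj J₂) (diagonal_exp_map_conj_mul_self μ)
    (commute_diagonal_diagonal_map _ _ _) (exchg_mul_self ℂ M) hshift
end

section
/- Let J_1, J_2 be real p×m matrices satisfying J_1 = Π_p·J_2·Π_m, and let Q_p ∈ ℂ^{p×p} and Q_m ∈ ℂ^{m×m} be left Π-real matrices (Π_p·conj(Q_p) = Q_p and Π_m·conj(Q_m) = Q_m). Then the transformed selection matrices satisfy 2·Re(Q_p^H·J_2·Q_m) = Q_p^H·(J_1 + J_2)·Q_m and 2·Im(Q_p^H·J_2·Q_m) = i·Q_p^H·(J_1 − J_2)·Q_m, where both left-hand sides are the entrywise real and imaginary parts regarded as complex matrices; in particular i·Q_p^H·(J_1 − J_2)·Q_m has real entries. -/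
open Matrix Complex

/-!
Conjugating `P conj(Q) = Q` with `P` real gives `P Q = conj(Q)`. So if `J₁ = Pᵀ J₂ R`, the factors
`P` and `R` are absorbed by `Q_p` and `Q_m`, and `Q_pᴴ J₁ Q_m` is the entrywise conjugate of
`Q_pᴴ J₂ Q_m`. The two identities are then `2 Re z = conj(z) + z` and `2 Im z = i (conj(z) - z)`.
-/

section Exchange

variable {R S : Type*} [Zero R] [One R] [Zero S] [One S]

theorem exchg_transpose (n : ℕ) : (exchg R n)ᵀ = exchg R n := by
  ext i j
  simp only [exchg, transpose_apply, of_apply, add_comm (j : ℕ)]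

theorem exchg_map (f : R → S) (h₀ : f 0 = 0) (h₁ : f 1 = 1) (n : ℕ) :
    (exchg R n).map f = exchg S n := by
  ext i j
  simp only [exchg, map_apply, of_apply, apply_ite f, h₀, h₁]

end Exchange

section ReIm

variable {k l : Type*} (A : Matrix k l ℂ)

theorem two_smul_map_re :
    (2 : ℂ) • A.map (fun z => (z.re : ℂ)) = A.map (starRingEnd ℂ) + A := by
  ext a b
  simp only [Matrix.smul_apply, Matrix.add_apply, map_apply, smul_eq_mul, re_eq_add_conj]
  ring

theorem two_smul_map_im :
    (2 : ℂ) • A.map (fun z => (z.im : ℂ)) = I • (A.map (starRingEnd ℂ) - A) := by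
  ext a b
  simp only [Matrix.smul_apply, Matrix.sub_apply, map_apply, smul_eq_mul, im_eq_sub_conj]
  field_simp
  rw [I_sq]
  ring

end ReIm

/-- The matrix `Q` is left `P`-real: `P * conj Q = Q`, with `P` a real matrix acting on the rows.
For `P` the exchange matrix this is the notion of a left `Π`-real matrix; `Q` may be rectangular. -/
def IsLeftReal {n k : Type*} [Fintype n] (P : Matrix n n ℝ) (Q : Matrix n k ℂ) : Prop :=
  P.map Complex.ofReal * Q.map (starRingEnd ℂ) = Q

theorem isLeftReal_exchg_iff {n : ℕ} {k : Type*} {Q : Matrix (Fin n) k ℂ} :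
    IsLeftReal (exchg ℝ n) Q ↔ exchg ℂ n * Q.map (starRingEnd ℂ) = Q := by
  rw [IsLeftReal, exchg_map _ ofReal_zero ofReal_one]

namespace IsLeftReal

section Absorption

variable {n k : Type*} [Fintype n] {P : Matrix n n ℝ} {Q : Matrix n k ℂ}

theorem mul_eq_map_conj (hQ : IsLeftReal P Q) :
    P.map Complex.ofReal * Q = Q.map (starRingEnd ℂ) := by
  have hP : (P.map Complex.ofReal).map (starRingEnd ℂ) = P.map Complex.ofReal := by
    ext i j
    exact conj_ofReal _
  have hQQ : (Q.map (starRingEnd ℂ)).map (starRingEnd ℂ) = Q := by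
    ext i j
    exact conj_conj _
  calc P.map Complex.ofReal * Q
      = (P.map Complex.ofReal * Q.map (starRingEnd ℂ)).map (starRingEnd ℂ) := by
        rw [Matrix.map_mul, hP, hQQ]
    _ = Q.map (starRingEnd ℂ) := congrArg (·.map (starRingEnd ℂ)) hQ

theorem conjTranspose_mul_transpose (hQ : IsLeftReal P Q) :
    Qᴴ * Pᵀ.map Complex.ofReal = Qᴴ.map (starRingEnd ℂ) := by
  have hP : Pᵀ.map Complex.ofReal = (P.map Complex.ofReal)ᴴ := by
    ext i j
    exact (conj_ofReal _).symm
  rw [hP, ← conjTranspose_mul, hQ.mul_eq_map_conj]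
  rfl

end Absorption

theorem conjTranspose_mul_mul_eq_map_conj {p m k l : Type*} [Fintype p] [Fintype m]
    {P : Matrix p p ℝ} {R : Matrix m m ℝ} {Qp : Matrix p k ℂ} {Qm : Matrix m l ℂ}
    (hQp : IsLeftReal P Qp) (hQm : IsLeftReal R Qm) (J : Matrix p m ℝ) :
    Qpᴴ * (Pᵀ * J * R).map Complex.ofReal * Qm
      = (Qpᴴ * J.map Complex.ofReal * Qm).map (starRingEnd ℂ) := by
  have hmap : (Pᵀ * J * R).map Complex.ofReal
      = Pᵀ.map Complex.ofReal * J.map Complex.ofReal * R.map Complex.ofReal :=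
    (Matrix.map_mul (f := ofRealHom)).trans (congrArg (· * _) Matrix.map_mul)
  have hJ : (J.map Complex.ofReal).map (starRingEnd ℂ) = J.map Complex.ofReal := by
    ext i j
    exact conj_ofReal _
  calc Qpᴴ * (Pᵀ * J * R).map Complex.ofReal * Qm
      = (Qpᴴ * Pᵀ.map Complex.ofReal) * J.map Complex.ofReal * (R.map Complex.ofReal * Qm) := by
        rw [hmap]
        simp only [Matrix.mul_assoc]
    _ = Qpᴴ.map (starRingEnd ℂ) * J.map Complex.ofReal * Qm.map (starRingEnd ℂ) := by
        rw [hQp.conjTranspose_mul_transpose, hQm.mul_eq_map_conj]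
    _ = (Qpᴴ * J.map Complex.ofReal * Qm).map (starRingEnd ℂ) := by
        rw [Matrix.map_mul, Matrix.map_mul, hJ]

end IsLeftReal

theorem transformed_selection_matrices_general
    {p m k l : Type*} [Fintype p] [Fintype m] {P : Matrix p p ℝ} {R : Matrix m m ℝ}
    {J₁ J₂ : Matrix p m ℝ} (hJ : J₁ = Pᵀ * J₂ * R)
    {Qp : Matrix p k ℂ} {Qm : Matrix m l ℂ} (hQp : IsLeftReal P Qp) (hQm : IsLeftReal R Qm) :
    (2 : ℂ) • ((Qpᴴ * J₂.map Complex.ofReal * Qm).map fun z => ((z.re : ℝ) : ℂ))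
        = Qpᴴ * (J₁.map Complex.ofReal + J₂.map Complex.ofReal) * Qm ∧
    (2 : ℂ) • ((Qpᴴ * J₂.map Complex.ofReal * Qm).map fun z => ((z.im : ℝ) : ℂ))
        = I • (Qpᴴ * (J₁.map Complex.ofReal - J₂.map Complex.ofReal) * Qm) ∧
    ∀ a b, ((I • (Qpᴴ * (J₁.map Complex.ofReal - J₂.map Complex.ofReal) * Qm)) a b).im = 0 := by
  have hconj : Qpᴴ * J₁.map Complex.ofReal * Qm
      = (Qpᴴ * J₂.map Complex.ofReal * Qm).map (starRingEnd ℂ) :=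
    hJ ▸ hQp.conjTranspose_mul_mul_eq_map_conj hQm J₂
  have him : (2 : ℂ) • ((Qpᴴ * J₂.map Complex.ofReal * Qm).map fun z => ((z.im : ℝ) : ℂ))
      = I • (Qpᴴ * (J₁.map Complex.ofReal - J₂.map Complex.ofReal) * Qm) := by
    rw [two_smul_map_im, Matrix.mul_sub, Matrix.sub_mul, hconj]
  refine ⟨?_, him, fun a b => ?_⟩
  · rw [two_smul_map_re, Matrix.mul_add, Matrix.add_mul, hconj]
  · rw [← him]
    simp

/-- if the real selection matrices satisfy `J₁ = Π_p J₂ Π_m` and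
`Q_p`, `Q_m` are left `Π`-real, then the transformed selection matrices satisfy
`2 Re(Q_pᴴ J₂ Q_m) = Q_pᴴ (J₁ + J₂) Q_m` and
`2 Im(Q_pᴴ J₂ Q_m) = i Q_pᴴ (J₁ − J₂) Q_m`
(entrywise real and imaginary parts regarded as complex matrices); in particular
`i Q_pᴴ (J₁ − J₂) Q_m` has real entries. -/
theorem transformed_selection_matrices
    (p m : ℕ) (J₁ J₂ : Matrix (Fin p) (Fin m) ℝ)
    (hJ : J₁ = exchg ℝ p * J₂ * exchg ℝ m)
    (Qp : Matrix (Fin p) (Fin p) ℂ) (Qm : Matrix (Fin m) (Fin m) ℂ)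
    (hQp : exchg ℂ p * Qp.map (starRingEnd ℂ) = Qp)
    (hQm : exchg ℂ m * Qm.map (starRingEnd ℂ) = Qm) :
    (2 : ℂ) • ((Qpᴴ * J₂.map Complex.ofReal * Qm).map fun z => ((z.re : ℝ) : ℂ))
        = Qpᴴ * (J₁.map Complex.ofReal + J₂.map Complex.ofReal) * Qm ∧
    (2 : ℂ) • ((Qpᴴ * J₂.map Complex.ofReal * Qm).map fun z => ((z.im : ℝ) : ℂ))
        = Complex.I • (Qpᴴ * (J₁.map Complex.ofReal - J₂.map Complex.ofReal) * Qm) ∧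
    ∀ a b, ((Complex.I • (Qpᴴ * (J₁.map Complex.ofReal - J₂.map Complex.ofReal) * Qm)) a b).im = 0 :=
  transformed_selection_matrices_general (by rwa [exchg_transpose])
    (isLeftReal_exchg_iff.mpr hQp) (isLeftReal_exchg_iff.mpr hQm)
end

section
/- Let U ∈ ℂ^{m×d} and let J_1, J_2 be complex p×m matrices satisfying the shift invariance relation J_1·U·Φ = J_2·U, where Φ = diag(e^{iμ_1},…,e^{iμ_d}) with all μ_i real and cos(μ_i/2) ≠ 0 for every i. Then the real-valued shift invariance relation (J_1 + J_2)·U·Ω = i·(J_1 − J_2)·U holds, where Ω = diag(tan(μ_1/2),…,tan(μ_d/2)) (regarded as a complex diagonal matrix with real entries). -/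
open Matrix Complex

/-!
The `j`-th column of `J₂ U` is `e^{iμ_j}` times that of `J₁ U`, so the sum and the difference of
the two are `1 + e^{iμ_j}` and `1 - e^{iμ_j}` times one vector. The Cayley transform
`φ ↦ i (1 - φ) / (1 + φ)` relates these factors, and it maps `e^{iμ}` to `tan (μ / 2)`.
-/

theorem one_add_exp_mul_I (z : ℂ) :
    1 + exp (z * I) = 2 * cos (z / 2) * exp (z / 2 * I) :=
  calc
    1 + exp (z * I) = (exp (z / 2 * I) + exp (-(z / 2) * I)) * exp (z / 2 * I) := by
      rw [add_mul, ← exp_add, ← exp_add, ← add_mul, ← add_mul, add_halves, neg_add_cancel,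
        zero_mul, exp_zero, add_comm]
    _ = 2 * cos (z / 2) * exp (z / 2 * I) := by rw [two_cos]

theorem one_sub_exp_mul_I_mul_I (z : ℂ) :
    (1 - exp (z * I)) * I = 2 * sin (z / 2) * exp (z / 2 * I) :=
  calc
    (1 - exp (z * I)) * I =
        (exp (-(z / 2) * I) - exp (z / 2 * I)) * exp (z / 2 * I) * I := by
      rw [sub_mul (exp _), ← exp_add, ← exp_add, ← add_mul, ← add_mul, add_halves,
        neg_add_cancel, zero_mul, exp_zero]
    _ = 2 * sin (z / 2) * exp (z / 2 * I) := by rw [two_sin, mul_right_comm]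

theorem one_add_exp_mul_I_mul_tan_half {z : ℂ} (hz : cos (z / 2) ≠ 0) :
    (1 + exp (z * I)) * tan (z / 2) = (1 - exp (z * I)) * I :=
  calc
    (1 + exp (z * I)) * tan (z / 2) = 2 * (tan (z / 2) * cos (z / 2)) * exp (z / 2 * I) := by
      rw [one_add_exp_mul_I]; ring
    _ = (1 - exp (z * I)) * I := by rw [tan_mul_cos hz, one_sub_exp_mul_I_mul_I]

theorem add_mul_diagonal_eq_smul_sub {R m n : Type*} [CommRing R] [Fintype n] [DecidableEq n]
    {A B : Matrix m n R} {φ ω : n → R} {c : R} (hB : A * diagonal φ = B)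
    (hω : ∀ j, (1 + φ j) * ω j = (1 - φ j) * c) :
    (A + B) * diagonal ω = c • (A - B) := by
  subst hB
  ext i j
  simp only [mul_diagonal, Matrix.add_apply, Matrix.sub_apply, Matrix.smul_apply, smul_eq_mul]
  linear_combination A i j * hω j

theorem real_valued_shift_invariance_general {m d p : Type*} [Fintype m] [Fintype d]
    [DecidableEq d] (U : Matrix m d ℂ) (J₁ J₂ : Matrix p m ℂ) (μ : d → ℂ)
    (hcos : ∀ i, cos (μ i / 2) ≠ 0)
    (hshift : J₁ * U * diagonal (fun i => exp (I * μ i)) = J₂ * U) :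
    (J₁ + J₂) * U * diagonal (fun i => tan (μ i / 2)) = I • ((J₁ - J₂) * U) := by
  rw [Matrix.add_mul, Matrix.sub_mul]
  refine add_mul_diagonal_eq_smul_sub hshift fun i => ?_
  rw [mul_comm I]
  exact one_add_exp_mul_I_mul_tan_half (hcos i)

/-- if `J₁ U Φ = J₂ U` with `Φ = diag(e^{iμ_1},…,e^{iμ_d})`, all `μ_i`
real and `cos(μ_i/2) ≠ 0`, then the real-valued shift invariance relation
`(J₁ + J₂) U Ω = i (J₁ − J₂) U` holds with `Ω = diag(tan(μ_1/2),…,tan(μ_d/2))`. -/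
theorem real_valued_shift_invariance
    (m d p : ℕ) (U : Matrix (Fin m) (Fin d) ℂ)
    (J₁ J₂ : Matrix (Fin p) (Fin m) ℂ) (μ : Fin d → ℝ)
    (hcos : ∀ i, Real.cos (μ i / 2) ≠ 0)
    (hshift : J₁ * U * Matrix.diagonal (fun i => Complex.exp (Complex.I * (μ i : ℂ)))
      = J₂ * U) :
    (J₁ + J₂) * U * Matrix.diagonal (fun i => ((Real.tan (μ i / 2) : ℝ) : ℂ))
      = Complex.I • ((J₁ - J₂) * U) := by
  simpa using real_valued_shift_invariance_general U J₁ J₂ (fun i => (μ i : ℂ))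
    (fun i => by exact_mod_cast hcos i) hshift
end

section
/- Let U ∈ ℂ^{m×d}, let Γ = Q·Λ·Q^{−1} with Q ∈ ℂ^{d×d} invertible and Λ = diag(λ_1,…,λ_d) with λ_i ≠ −1 for all i, and let J_1, J_2 be complex p×m matrices satisfying J_1·U·Γ = J_2·U. Then (J_1 + J_2)·U·(Q·Ω·Q^{−1}) = i·(J_1 − J_2)·U, where Ω = diag(i·(1 − λ_1)/(1 + λ_1),…, i·(1 − λ_d)/(1 + λ_d)). In particular, the matrices solving the complex-valued and the real-valued shift invariance equations have the same eigenvectors Q, and their eigenvalues are related by ω_i = i·(1 − λ_i)/(1 + λ_i). -/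
open Matrix Complex

/-!
From `J₁ U Γ = J₂ U` one gets `(J₁ + J₂) U = J₁ U (1 + Γ)` and `(J₁ - J₂) U = J₁ U (1 - Γ)`, so
every solution `X` of the Cayley relation `(1 + Γ) X = c (1 - Γ)` satisfies
`(J₁ + J₂) U X = c (J₁ - J₂) U`. The relation is invariant under conjugation, and for
`Γ = diag(λ_i)` it is solved by `X = diag(c (1 - λ_i) / (1 + λ_i))`.
-/

theorem conj_one_add_mul_conj_eq_smul_one_sub {R A : Type*} [Ring A] [Monoid R]
    [DistribMulAction R A] [SMulCommClass R A A] [IsScalarTower R A A]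
    (q : Aˣ) {a x : A} {c : R} (h : (1 + a) * x = c • (1 - a)) :
    (1 + q * a * ↑q⁻¹) * (q * x * ↑q⁻¹) = c • (1 - q * a * ↑q⁻¹) := by
  have h_conj : ConjAct.toConjAct q • ((1 + a) * x) = ConjAct.toConjAct q • c • (1 - a) :=
    congrArg _ h
  rw [smul_mul', ← smul_comm c, smul_add, smul_sub, smul_one] at h_conj
  simpa only [ConjAct.units_smul_def, ConjAct.ofConjAct_toConjAct] using h_conj

section ShiftInvariance

variable {K l m n : Type*} [Fintype n] [DecidableEq n]

theorem one_add_diagonal_mul_diagonal_eq_smul_one_sub [Field K] {lam : n → K}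
    (hlam : ∀ i, lam i ≠ -1) (c : K) :
    (1 + diagonal lam) * diagonal (fun i => c * ((1 - lam i) / (1 + lam i))) =
      c • (1 - diagonal lam) := by
  rw [← diagonal_one, diagonal_add, diagonal_sub, diagonal_mul_diagonal, ← diagonal_smul]
  congr 1
  funext i
  have h_ne : 1 + lam i ≠ 0 := fun h => hlam i (eq_neg_of_add_eq_zero_right h)
  rw [Pi.smul_apply, smul_eq_mul, mul_left_comm, mul_div_cancel₀ _ h_ne]

theorem shift_add_mul_eq_smul_sub {R S : Type*} [Ring R] [Monoid S] [DistribMulAction S R]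
    [SMulCommClass S R R] {V₁ V₂ : Matrix l n R} {Γ X : Matrix n n R} {c : S}
    (hshift : V₁ * Γ = V₂) (hX : (1 + Γ) * X = c • (1 - Γ)) :
    (V₁ + V₂) * X = c • (V₁ - V₂) :=
  calc
    (V₁ + V₂) * X = V₁ * ((1 + Γ) * X) := by
      rw [← Matrix.mul_assoc, Matrix.mul_add, Matrix.mul_one, hshift]
    _ = c • (V₁ - V₂) := by
      rw [hX, Matrix.mul_smul, Matrix.mul_sub, Matrix.mul_one, hshift]

theorem real_valued_shift_invariance_eigenstructure_general [Field K] [Fintype m]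
    {U : Matrix m n K} {J₁ J₂ : Matrix l m K} {Q : Matrix n n K}
    (hQ : IsUnit Q) {lam : n → K} (hlam : ∀ i, lam i ≠ -1)
    (hshift : J₁ * U * (Q * diagonal lam * Q⁻¹) = J₂ * U) (c : K) :
    (J₁ + J₂) * U * (Q * diagonal (fun i => c * ((1 - lam i) / (1 + lam i))) * Q⁻¹) =
      c • ((J₁ - J₂) * U) := by
  obtain ⟨q, rfl⟩ := hQ
  rw [← coe_units_inv] at hshift ⊢
  rw [Matrix.add_mul, Matrix.sub_mul]
  exact shift_add_mul_eq_smul_sub hshift <| conj_one_add_mul_conj_eq_smul_one_sub q <|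
    one_add_diagonal_mul_diagonal_eq_smul_one_sub hlam c

end ShiftInvariance

/-- let `Γ = Q Λ Q⁻¹` with `Q` invertible and
`Λ = diag(λ_1,…,λ_d)`, `λ_i ≠ −1`, and suppose `J₁ U Γ = J₂ U`. Then
`(J₁ + J₂) U (Q Ω Q⁻¹) = i (J₁ − J₂) U` with
`Ω = diag(i(1 − λ_1)/(1 + λ_1),…,i(1 − λ_d)/(1 + λ_d))`: the solutions of the
complex- and real-valued shift invariance equations share the eigenvectors `Q`, with
eigenvalues related by `ω_i = i(1 − λ_i)/(1 + λ_i)`. -/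
theorem real_valued_shift_invariance_eigenstructure
    (m d p : ℕ) (U : Matrix (Fin m) (Fin d) ℂ)
    (J₁ J₂ : Matrix (Fin p) (Fin m) ℂ)
    (Q : Matrix (Fin d) (Fin d) ℂ) (hQ : IsUnit Q.det)
    (lam : Fin d → ℂ) (hlam : ∀ i, lam i ≠ -1)
    (Γ : Matrix (Fin d) (Fin d) ℂ)
    (hΓ : Γ = Q * Matrix.diagonal lam * Q⁻¹)
    (hshift : J₁ * U * Γ = J₂ * U) :
    (J₁ + J₂) * U *
        (Q * Matrix.diagonal (fun i => Complex.I * ((1 - lam i) / (1 + lam i))) * Q⁻¹)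
      = Complex.I • ((J₁ - J₂) * U) := by
  subst hΓ
  exact real_valued_shift_invariance_eigenstructure_general ((isUnit_iff_isUnit_det Q).2 hQ) hlam
    hshift Complex.I
end

section
/- Let R ≥ 1, let M_1,…,M_R be positive integers, and let M = M_1·…·M_R. Define the real R×R matrix G_2 by (G_2)_{r,r} = (1/6)·M·(M_r − 1)·(2M_r − 1) and (G_2)_{r_1,r_2} = (1/4)·M·(M_{r_1} − 1)·(M_{r_2} − 1) for r_1 ≠ r_2, and the real vector h ∈ ℝ^R by h_r = −(1/2)·M·(M_r − 1). Then G_2 − (1/M)·h·h^T is the diagonal matrix with diagonal entries (1/12)·M·(M_r² − 1), r = 1,…,R. Consequently, for any real P > 0, σ > 0 and integer N ≥ 1, the matrix (σ²/(2N))·(P·(G_2 − (1/M)·h·h^T))^{−1} is the diagonal matrix with diagonal entries (σ²/(N·P))·6/(M·(M_r² − 1)), i.e., the deterministic R-D NC Cramér–Rao bound for a single strictly non-circular source on an R-D uniform sampling grid. -/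
open Matrix

/-- The matrix `G₂` appearing in the single-source deterministic R-D NC Cramér–Rao
bound computation: `(G₂)_{r,r} = (1/6) M (M_r − 1)(2 M_r − 1)` and
`(G₂)_{r₁,r₂} = (1/4) M (M_{r₁} − 1)(M_{r₂} − 1)` for `r₁ ≠ r₂`, where `M = ∏ M_r`. -/
noncomputable def G2 (R : ℕ) (Mr : Fin R → ℕ) : Matrix (Fin R) (Fin R) ℝ :=
  Matrix.of fun r₁ r₂ =>
    if r₁ = r₂ then
      (1 / 6 : ℝ) * (∏ r, (Mr r : ℝ)) * ((Mr r₁ : ℝ) - 1) * (2 * (Mr r₁ : ℝ) - 1)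
    else
      (1 / 4 : ℝ) * (∏ r, (Mr r : ℝ)) * ((Mr r₁ : ℝ) - 1) * ((Mr r₂ : ℝ) - 1)

/-- The vector `h` with `h_r = −(1/2) M (M_r − 1)`, where `M = ∏ M_r`. -/
noncomputable def hvec (R : ℕ) (Mr : Fin R → ℕ) : Fin R → ℝ :=
  fun r => -(1 / 2 : ℝ) * (∏ r', (Mr r' : ℝ)) * ((Mr r : ℝ) - 1)

/-!
Up to sign, `h` and `G₂` are the sums of the first and second moments of the index vector
`m = (m₁, …, m_R)` over the grid `∏ {0, …, M_r − 1}`, so `G₂ − (1/M) h hᵀ` is `M` times the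
covariance matrix of a uniformly distributed grid point. Its coordinates are independent, and the
uniform law on `{0, …, M_r − 1}` has variance `(M_r² − 1)/12`. In terms of the closed forms: the
rank-one matrix `(1/M) h hᵀ` follows everywhere the formula that `G₂` follows off the diagonal.
-/

theorem inv_diagonal_of_ne_zero {ι K : Type*} [Fintype ι] [DecidableEq ι] [Field K]
    {d : ι → K} (hd : ∀ i, d i ≠ 0) : (diagonal d)⁻¹ = diagonal fun i => (d i)⁻¹ := by
  apply Matrix.inv_eq_right_inv
  simp only [diagonal_mul_diagonal, mul_inv_cancel₀ (hd _), diagonal_one]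

theorem smul_inv_smul_diagonal {ι K : Type*} [Fintype ι] [DecidableEq ι] [Field K]
    (c : K) {p : K} (hp : p ≠ 0) {d : ι → K} (hd : ∀ i, d i ≠ 0) :
    c • (p • diagonal d)⁻¹ = diagonal fun i => c / (p * d i) := by
  rw [← diagonal_smul, inv_diagonal_of_ne_zero (d := p • d) fun i => mul_ne_zero hp (hd i),
    ← diagonal_smul]
  simp only [Pi.smul_def, smul_eq_mul, div_eq_mul_inv]

theorem prod_natCast_pos {ι : Type*} [Fintype ι] {m : ι → ℕ} (hm : ∀ i, 0 < m i) :
    (0 : ℝ) < ∏ i, (m i : ℝ) :=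
  Finset.prod_pos fun i _ => Nat.cast_pos.mpr (hm i)

section UniformGrid

variable {R : ℕ} {Mr : Fin R → ℕ}

theorem smul_vecMulVec_hvec (hMr : ∀ r, 0 < Mr r) :
    (1 / ∏ r, (Mr r : ℝ)) • vecMulVec (hvec R Mr) (hvec R Mr)
      = of fun r₁ r₂ =>
          (1 / 4 : ℝ) * (∏ r, (Mr r : ℝ)) * ((Mr r₁ : ℝ) - 1) * ((Mr r₂ : ℝ) - 1) := by
  have hM := (prod_natCast_pos hMr).ne'
  ext r₁ r₂
  simp only [hvec, Matrix.smul_apply, vecMulVec_apply, of_apply, smul_eq_mul]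
  field_simp
  ring

theorem G2_sub_smul_vecMulVec_hvec (hMr : ∀ r, 0 < Mr r) :
    G2 R Mr - (1 / ∏ r, (Mr r : ℝ)) • vecMulVec (hvec R Mr) (hvec R Mr)
      = diagonal fun r => (1 / 12 : ℝ) * (∏ r', (Mr r' : ℝ)) * ((Mr r : ℝ) ^ 2 - 1) := by
  rw [smul_vecMulVec_hvec hMr]
  ext r₁ r₂
  obtain rfl | hne := eq_or_ne r₁ r₂
  · simp only [G2, Matrix.sub_apply, of_apply, if_true, diagonal_apply_eq]
    ring
  · simp only [G2, Matrix.sub_apply, of_apply, if_neg hne, sub_self, diagonal_apply_ne _ hne]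

end UniformGrid

/-- `G₂ − (1/M) h hᵀ` is the diagonal matrix with entries
`(1/12) M (M_r² − 1)`; consequently (for `M_r ≥ 2`, ensuring invertibility), for any
`P > 0`, `σ > 0` and `N ≥ 1`, the matrix `(σ²/(2N)) (P (G₂ − (1/M) h hᵀ))⁻¹` is the
diagonal matrix with entries `(σ²/(N P)) · 6/(M (M_r² − 1))` — the deterministic R-D NC
Cramér–Rao bound for a single strictly non-circular source on an R-D uniform grid. -/
theorem single_source_nc_crb
    (R : ℕ) (hR : 1 ≤ R) (Mr : Fin R → ℕ) (hMr : ∀ r, 0 < Mr r) :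
    G2 R Mr - (1 / ∏ r, (Mr r : ℝ)) • Matrix.vecMulVec (hvec R Mr) (hvec R Mr)
      = Matrix.diagonal
          (fun r => (1 / 12 : ℝ) * (∏ r', (Mr r' : ℝ)) * ((Mr r : ℝ) ^ 2 - 1)) ∧
    ((∀ r, 2 ≤ Mr r) → ∀ (P σ : ℝ), 0 < P → 0 < σ → ∀ N : ℕ, 1 ≤ N →
      (σ ^ 2 / (2 * N)) •
          (P • (G2 R Mr -
            (1 / ∏ r, (Mr r : ℝ)) • Matrix.vecMulVec (hvec R Mr) (hvec R Mr)))⁻¹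
        = Matrix.diagonal
            (fun r => (σ ^ 2 / (N * P)) *
              (6 / ((∏ r', (Mr r' : ℝ)) * ((Mr r : ℝ) ^ 2 - 1))))) := by
  have hG := G2_sub_smul_vecMulVec_hvec hMr
  refine ⟨hG, fun hMr₂ P σ hP _ N hN => ?_⟩
  have hM := prod_natCast_pos hMr
  have hsq (r : Fin R) : (0 : ℝ) < (Mr r : ℝ) ^ 2 - 1 :=
    sub_pos.mpr (one_lt_pow₀ (Nat.one_lt_cast.mpr (hMr₂ r)) two_ne_zero)
  have hdiag (r : Fin R) :
      (1 / 12 : ℝ) * (∏ r', (Mr r' : ℝ)) * ((Mr r : ℝ) ^ 2 - 1) ≠ 0 :=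
    (mul_pos (mul_pos (by norm_num) hM) (hsq r)).ne'
  rw [hG, smul_inv_smul_diagonal _ hP.ne' hdiag]
  congr 1 with r
  have hN₀ : (N : ℝ) ≠ 0 := Nat.cast_ne_zero.mpr (Nat.one_le_iff_ne_zero.mp hN)
  have hsq₀ := (hsq r).ne'
  field_simp
  norm_num
end

section
/- Define the asymptotic efficiency η(M) = 6·(M − 1)/(M·(M + 1)) for integers M ≥ 2. Then: (a) η(M) equals the ratio of the single-source deterministic NC Cramér–Rao bound coefficient 6/(M·(M² − 1)) to the single-source ESPRIT MSE coefficient 1/(M − 1)², i.e., (6/(M·(M² − 1)))·(M − 1)² = 6·(M − 1)/(M·(M + 1)); (b) η(2) = 1 and η(3) = 1, so 1-D NC Standard ESPRIT and 1-D NC Unitary ESPRIT with least squares are asymptotically efficient for M = 2 and M = 3; (c) η(M) < 1 for every M ≥ 4; and (d) η(M) → 0 as M → ∞. -/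
/-- The asymptotic efficiency `η(M) = 6(M − 1)/(M(M + 1))` of 1-D NC Standard/Unitary
ESPRIT with least squares for a single strictly non-circular source and an `M`-element
uniform linear array. -/
noncomputable def eta (M : ℕ) : ℝ := 6 * ((M : ℝ) - 1) / ((M : ℝ) * ((M : ℝ) + 1))

/-- The single-source deterministic 1-D NC Cramér–Rao bound coefficient `6 / (M (M² - 1))`, without
the reciprocal effective SNR factor that it shares with `espritMseCoeff`. -/
noncomputable def ncCrbCoeff (M : ℕ) : ℝ := 6 / ((M : ℝ) * ((M : ℝ) ^ 2 - 1))

/-- The single-source MSE coefficient `1 / (M - 1)²` of 1-D NC Standard/Unitary ESPRIT,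
without the reciprocal effective SNR factor. It is the case `M_r = M` of `M_r / (M (M_r - 1)²)`. -/
noncomputable def espritMseCoeff (M : ℕ) : ℝ := 1 / ((M : ℝ) - 1) ^ 2

theorem ncCrbCoeff_div_espritMseCoeff {M : ℕ} (hM : M ≠ 1) :
    ncCrbCoeff M / espritMseCoeff M = eta M := by
  have h_sub : (M : ℝ) - 1 ≠ 0 := sub_ne_zero.2 (by exact_mod_cast hM)
  have h_factor : (M : ℝ) ^ 2 - 1 = (M - 1) * (M + 1) := by ring
  rw [ncCrbCoeff, espritMseCoeff, eta, h_factor]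
  field_simp

theorem one_sub_eta {M : ℕ} (hM : M ≠ 0) :
    1 - eta M = ((M : ℝ) - 2) * ((M : ℝ) - 3) / ((M : ℝ) * ((M : ℝ) + 1)) := by
  rw [eta]
  field_simp
  ring

theorem eta_eq_one_iff {M : ℕ} (hM : M ≠ 0) : eta M = 1 ↔ M = 2 ∨ M = 3 := by
  have h_den : (M : ℝ) * ((M : ℝ) + 1) ≠ 0 := by positivity
  rw [eq_comm, ← sub_eq_zero, one_sub_eta hM, div_eq_zero_iff, or_iff_left h_den, mul_eq_zero,
    sub_eq_zero, sub_eq_zero]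
  norm_cast

theorem eta_lt_one {M : ℕ} (hM : 3 < M) : eta M < 1 := by
  have h_three : (3 : ℝ) < M := by exact_mod_cast hM
  have h_num : 0 < ((M : ℝ) - 2) * ((M : ℝ) - 3) := mul_pos (by linarith) (by linarith)
  rw [← sub_pos, one_sub_eta (by lia)]
  positivity

theorem eta_eq_div_sub_div {M : ℕ} (hM : M ≠ 0) :
    eta M = 12 / ((M : ℝ) + 1) - 6 / (M : ℝ) := by
  rw [eta]
  field_simp
  ring

theorem tendsto_eta_atTop : Filter.Tendsto eta Filter.atTop (nhds 0) := by
  have h_succ : Filter.Tendsto (fun M : ℕ => 12 / ((M : ℝ) + 1)) Filter.atTop (nhds 0) := by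
    exact_mod_cast (Filter.tendsto_add_atTop_iff_nat 1).2
      (tendsto_const_div_atTop_nhds_zero_nat (12 : ℝ))
  have h_sub := h_succ.sub (tendsto_const_div_atTop_nhds_zero_nat (6 : ℝ))
  rw [sub_zero] at h_sub
  refine h_sub.congr' ?_
  filter_upwards [Filter.eventually_ne_atTop 0] with M hM
  exact (eta_eq_div_sub_div hM).symm

/-- (a) `η(M)` equals the ratio of the single-source deterministic NC CRB
coefficient `6/(M(M² − 1))` to the single-source ESPRIT MSE coefficient `1/(M − 1)²`,
i.e. `(6/(M(M² − 1))) (M − 1)² = 6(M − 1)/(M(M + 1))`; (b) `η(2) = 1` and `η(3) = 1`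
(asymptotic efficiency for `M = 2, 3`); (c) `η(M) < 1` for every `M ≥ 4`;
(d) `η(M) → 0` as `M → ∞`. -/
theorem asymptotic_efficiency_single_source :
    (∀ M : ℕ, 2 ≤ M →
      6 / ((M : ℝ) * ((M : ℝ) ^ 2 - 1)) * ((M : ℝ) - 1) ^ 2 = eta M) ∧
    eta 2 = 1 ∧ eta 3 = 1 ∧
    (∀ M : ℕ, 4 ≤ M → eta M < 1) ∧
    Filter.Tendsto (fun M : ℕ => eta M) Filter.atTop (nhds 0) := by
  refine ⟨fun M hM => ?_, (eta_eq_one_iff two_ne_zero).2 (.inl rfl),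
    (eta_eq_one_iff three_ne_zero).2 (.inr rfl), fun _ => eta_lt_one, tendsto_eta_atTop⟩
  rw [← ncCrbCoeff_div_espritMseCoeff (by lia), ncCrbCoeff, espritMseCoeff, div_div_eq_mul_div,
    div_one]
end

section
/- Let M ≥ 2 be an integer and μ, φ real numbers. Let a ∈ ℂ^M with entries a_k = e^{i·k·μ}, k = 0,…,M−1, and let a^{nc} = [a ; e^{−2iφ}·Π_M·conj(a)] ∈ ℂ^{2M}. Let J_1 = [I_{M−1} | 0_{(M−1)×1}] and J_2 = [0_{(M−1)×1} | I_{M−1}] be the (M−1)×M maximum-overlap selection matrices, and define the augmented selection matrices J_1^{nc} = blkdiag(J_1, Π_{M−1}·J_2·Π_M) and J_2^{nc} = blkdiag(J_2, Π_{M−1}·J_1·Π_M). Let P = I_{2M} − (1/(2M))·a^{nc}·(a^{nc})^H be the orthogonal projection onto the orthogonal complement of a^{nc}, and define the row vector v^T = (√(2M)/(2(M−1)))·(a^{nc})^H·(J_1^{nc})^T·(e^{−iμ}·J_2^{nc} − J_1^{nc})·P ∈ ℂ^{1×2M}. Then ‖v‖² = 2M/(M−1)² and v^T·Π_{2M}·v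 = −(2M/(M−1)²)·e^{2iφ}. -/
open Matrix Complex

/-- The ULA steering vector `a ∈ ℂ^M` with entries `a_k = e^{i k μ}`, as a column. -/
noncomputable def avec (M : ℕ) (μ : ℝ) : Matrix (Fin M) (Fin 1) ℂ :=
  Matrix.of fun k _ => Complex.exp (Complex.I * ((k : ℕ) : ℂ) * (μ : ℂ))

/-- The augmented steering vector `a^{nc} = [a ; e^{−2iφ} Π_M conj(a)] ∈ ℂ^{2M}`. -/
noncomputable def ancvec (M : ℕ) (μ φ : ℝ) : Matrix (Fin M ⊕ Fin M) (Fin 1) ℂ :=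
  Matrix.fromRows (avec M μ)
    (Complex.exp (-(2 * (φ : ℂ) * Complex.I)) • (exchg ℂ M * (avec M μ).map (starRingEnd ℂ)))

/-- The maximum-overlap selection matrix `J₁ = [I_{M−1} | 0]`. -/
def Jsel1 (M : ℕ) : Matrix (Fin (M - 1)) (Fin M) ℂ :=
  Matrix.of fun i j => if (j : ℕ) = (i : ℕ) then 1 else 0

/-- The maximum-overlap selection matrix `J₂ = [0 | I_{M−1}]`. -/
def Jsel2 (M : ℕ) : Matrix (Fin (M - 1)) (Fin M) ℂ :=
  Matrix.of fun i j => if (j : ℕ) = (i : ℕ) + 1 then 1 else 0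

/-- The augmented selection matrix `J₁^{nc} = blkdiag(J₁, Π_{M−1} J₂ Π_M)`. -/
noncomputable def J1nc (M : ℕ) : Matrix (Fin (M - 1) ⊕ Fin (M - 1)) (Fin M ⊕ Fin M) ℂ :=
  Matrix.fromBlocks (Jsel1 M) 0 0 (exchg ℂ (M - 1) * Jsel2 M * exchg ℂ M)

/-- The augmented selection matrix `J₂^{nc} = blkdiag(J₂, Π_{M−1} J₁ Π_M)`. -/
noncomputable def J2nc (M : ℕ) : Matrix (Fin (M - 1) ⊕ Fin (M - 1)) (Fin M ⊕ Fin M) ℂ :=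
  Matrix.fromBlocks (Jsel2 M) 0 0 (exchg ℂ (M - 1) * Jsel1 M * exchg ℂ M)

/-- The orthogonal projection `P = I_{2M} − (1/(2M)) a^{nc} (a^{nc})ᴴ` onto the
orthogonal complement of `a^{nc}`. -/
noncomputable def Pperp (M : ℕ) (μ φ : ℝ) : Matrix (Fin M ⊕ Fin M) (Fin M ⊕ Fin M) ℂ :=
  1 - ((1 : ℂ) / (2 * (M : ℂ))) • (ancvec M μ φ * (ancvec M μ φ)ᴴ)

/-- The row vector
`vᵀ = (√(2M)/(2(M−1))) (a^{nc})ᴴ (J₁^{nc})ᵀ (e^{−iμ} J₂^{nc} − J₁^{nc}) P ∈ ℂ^{1×2M}`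
from the single-source ESPRIT error computation. -/
noncomputable def vT (M : ℕ) (μ φ : ℝ) : Matrix (Fin 1) (Fin M ⊕ Fin M) ℂ :=
  (((Real.sqrt (2 * M) : ℝ) : ℂ) / (2 * ((M : ℂ) - 1))) •
    ((ancvec M μ φ)ᴴ * (J1nc M)ᵀ *
      (Complex.exp (-(Complex.I * (μ : ℂ))) • J2nc M - J1nc M) * Pperp M μ φ)

/-- The `2M × 2M` exchange matrix `Π_{2M}`, represented on the index type
`Fin M ⊕ Fin M` as the block matrix `[[0, Π_M],[Π_M, 0]]`. -/
def Pi2M (M : ℕ) : Matrix (Fin M ⊕ Fin M) (Fin M ⊕ Fin M) ℂ :=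
  Matrix.fromBlocks 0 (exchg ℂ M) (exchg ℂ M) 0

/-!
Since `Π J₂ Π = J₁`, `Π J₁ Π = J₂`, and `Π conj(a)` is a scalar multiple of `a`, the vector `a^{nc}`
inherits the shift invariance `J₂^{nc} a^{nc} = e^{iμ} J₁^{nc} a^{nc}` of `a`. Conjugating it turns
`(a^{nc})ᴴ (J₁^{nc})ᴴ (e^{-iμ} J₂^{nc} - J₁^{nc})` into `(a^{nc})ᴴ D`, where
`D = (J₂^{nc})ᴴ J₂^{nc} - (J₁^{nc})ᴴ J₁^{nc}` is diagonal with entries `-1` and `1` at the two edges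
of each half and `0` elsewhere. The entries of `a^{nc}` have modulus one, so
`(a^{nc})ᴴ D a^{nc} = tr D = 0`, which makes the projection act trivially, and
`‖(a^{nc})ᴴ D‖² = tr D² = 4`. Finally `Π_{2M}` anticommutes with `D` and maps `conj(a^{nc})` to
`e^{2iφ} a^{nc}`, so `Π_{2M} v = -e^{2iφ} conj(v)` and `vᵀ Π_{2M} v = -e^{2iφ} ‖v‖²`.
-/

section Exchange

variable {R : Type*} [NonAssocSemiring R] {n : ℕ} {κ : Type*}

theorem exchg_eq_one_submatrix_rev :
    exchg R n = (1 : Matrix (Fin n) (Fin n) R).submatrix Fin.revPerm id := by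
  ext i j
  have h : (i : ℕ) + j = n - 1 ↔ i.rev = j := by
    rw [Fin.ext_iff, Fin.val_rev]
    omega
  simp only [exchg, of_apply, h, submatrix_apply, one_apply, Fin.revPerm_apply, id_eq]

theorem exchg_mul (A : Matrix (Fin n) κ R) : exchg R n * A = A.submatrix Fin.rev id := by
  rw [exchg_eq_one_submatrix_rev]
  exact one_submatrix_mul Fin.revPerm (Equiv.refl _) A

theorem mul_exchg (A : Matrix κ (Fin n) R) : A * exchg R n = A.submatrix id Fin.rev := by
  rw [exchg_eq_one_submatrix_rev]
  exact mul_submatrix_one Fin.revPerm id A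

theorem exchg_mul_exchg_mul (A : Matrix (Fin n) κ R) : exchg R n * (exchg R n * A) = A := by
  ext i j
  simp only [exchg_mul, submatrix_apply, Fin.rev_rev, id_eq]

theorem exchg_mul_diagonal (d : Fin n → R) :
    exchg R n * diagonal d = diagonal (d ∘ Fin.rev) * exchg R n := by
  ext i j
  simp only [exchg_mul, mul_exchg, submatrix_apply, diagonal_apply, id_eq, Function.comp_apply,
    Fin.rev_eq_iff]

end Exchange

theorem conjTranspose_one_submatrix_mul_self {m n R : Type*} [Fintype m] [DecidableEq n]
    [NonAssocSemiring R] [StarRing R] {f : m → n} (hf : Function.Injective f) :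
    ((1 : Matrix n n R).submatrix f id)ᴴ * (1 : Matrix n n R).submatrix f id =
      diagonal ((Set.range f).indicator 1) := by
  ext i j
  simp only [mul_apply, conjTranspose_submatrix, conjTranspose_one, submatrix_apply, id_eq,
    one_apply, ite_mul, one_mul, zero_mul, diagonal_apply]
  by_cases hi : i ∈ Set.range f
  · obtain ⟨k, rfl⟩ := hi
    rw [Finset.sum_eq_single k (fun l _ hl => if_neg (hf.ne hl.symm)) (by simp), if_pos rfl,
      Set.indicator_of_mem (Set.mem_range_self k), Pi.one_apply]
  · have hne : ∀ k, i ≠ f k := fun k hk => hi ⟨k, hk.symm⟩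
    simp only [hne, if_false, Finset.sum_const_zero, Set.indicator_of_notMem hi, ite_self]

theorem conjTranspose_one_submatrix_mul_self_of_range_eq {m n R : Type*} [Fintype m]
    [DecidableEq n] [NonAssocRing R] [StarRing R] {f : m → n} {i : n} (hf : Function.Injective f)
    (hrange : Set.range f = {i}ᶜ) :
    ((1 : Matrix n n R).submatrix f id)ᴴ * (1 : Matrix n n R).submatrix f id =
      diagonal (1 - Pi.single i 1) := by
  rw [conjTranspose_one_submatrix_mul_self hf, hrange, Set.indicator_compl,
    Set.indicator_singleton, Pi.one_apply]

theorem conjTranspose_mul_smul_sub_of_mul_eq_smul {l m n R : Type*} [Fintype m] [Fintype n]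
    [CommRing R] [StarRing R] {J₁ J₂ : Matrix m n R} {a : Matrix n l R} {z : R}
    (h : J₂ * a = z • (J₁ * a)) :
    aᴴ * J₁ᴴ * (star z • J₂ - J₁) = aᴴ * (J₂ᴴ * J₂ - J₁ᴴ * J₁) := by
  have hH : aᴴ * J₂ᴴ = star z • (aᴴ * J₁ᴴ) := by
    rw [← conjTranspose_mul, h, conjTranspose_smul, conjTranspose_mul]
  simp only [Matrix.mul_sub, ← Matrix.mul_assoc, hH, Matrix.mul_smul, Matrix.smul_mul]

theorem conjTranspose_mul_diagonal_mul_apply_of_norm_eq_one {ι κ 𝕜 : Type*} [Fintype ι]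
    [DecidableEq ι] [RCLike 𝕜] {x : Matrix ι κ 𝕜} {k : κ} (hx : ∀ i, ‖x i k‖ = 1) (d : ι → 𝕜) :
    (xᴴ * diagonal d * x) k k = ∑ i, d i := by
  rw [mul_apply]
  refine Finset.sum_congr rfl fun i _ => ?_
  rw [mul_diagonal, conjTranspose_apply, mul_right_comm, RCLike.star_def, RCLike.conj_mul, hx]
  simp only [map_one, one_pow, one_mul]

theorem ofReal_sum_normSq_row {m n : Type*} [Fintype n] (A : Matrix m n ℂ) (i : m) :
    ((∑ j, normSq (A i j) : ℝ) : ℂ) = (A * Aᴴ) i i := by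
  simp only [ofReal_sum, mul_apply, conjTranspose_apply, star_def, mul_conj]

section Selection

theorem exchg_mul_Jsel1_mul_exchg (M : ℕ) : exchg ℂ (M - 1) * Jsel1 M * exchg ℂ M = Jsel2 M := by
  ext i j
  simp only [mul_exchg, exchg_mul, submatrix_apply, id_eq, Jsel1, Jsel2, of_apply, Fin.val_rev]
  congr 1
  grind

theorem exchg_mul_Jsel2_mul_exchg (M : ℕ) : exchg ℂ (M - 1) * Jsel2 M * exchg ℂ M = Jsel1 M := by
  ext i j
  simp only [mul_exchg, exchg_mul, submatrix_apply, id_eq, Jsel1, Jsel2, of_apply, Fin.val_rev]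
  congr 1
  grind

theorem Jsel1_succ_eq_one_submatrix (N : ℕ) :
    Jsel1 (N + 1) = (1 : Matrix (Fin (N + 1)) (Fin (N + 1)) ℂ).submatrix Fin.castSucc id := by
  ext i j
  simp only [Jsel1, of_apply, submatrix_apply, one_apply, Fin.ext_iff, Fin.val_castSucc, id_eq,
    eq_comm]

theorem Jsel2_succ_eq_one_submatrix (N : ℕ) :
    Jsel2 (N + 1) = (1 : Matrix (Fin (N + 1)) (Fin (N + 1)) ℂ).submatrix Fin.succ id := by
  ext i j
  simp only [Jsel2, of_apply, submatrix_apply, one_apply, Fin.ext_iff, Fin.val_succ, id_eq,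
    eq_comm]

theorem J1nc_eq_fromBlocks (M : ℕ) : J1nc M = fromBlocks (Jsel1 M) 0 0 (Jsel1 M) := by
  rw [J1nc, exchg_mul_Jsel2_mul_exchg]

theorem J2nc_eq_fromBlocks (M : ℕ) : J2nc M = fromBlocks (Jsel2 M) 0 0 (Jsel2 M) := by
  rw [J2nc, exchg_mul_Jsel1_mul_exchg]

theorem conjTranspose_J1nc (M : ℕ) : (J1nc M)ᴴ = (J1nc M)ᵀ := by
  have hJ : (Jsel1 M)ᴴ = (Jsel1 M)ᵀ := by
    ext i j
    simp only [Jsel1, conjTranspose_apply, transpose_apply, of_apply, apply_ite star, star_one,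
      star_zero]
  simp only [J1nc_eq_fromBlocks, fromBlocks_conjTranspose, fromBlocks_transpose, hJ,
    conjTranspose_zero, transpose_zero]

theorem conjTranspose_Jsel1_mul_Jsel1 (N : ℕ) :
    (Jsel1 (N + 1))ᴴ * Jsel1 (N + 1) = diagonal (1 - Pi.single (Fin.last N) 1) := by
  have hrange : Set.range (Fin.castSucc : Fin N → _) = {Fin.last N}ᶜ :=
    Set.ext fun _ => Fin.exists_castSucc_eq
  rw [Jsel1_succ_eq_one_submatrix]
  exact conjTranspose_one_submatrix_mul_self_of_range_eq (Fin.castSucc_injective N) hrange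

theorem conjTranspose_Jsel2_mul_Jsel2 (N : ℕ) :
    (Jsel2 (N + 1))ᴴ * Jsel2 (N + 1) = diagonal (1 - Pi.single 0 1) := by
  rw [Jsel2_succ_eq_one_submatrix]
  exact conjTranspose_one_submatrix_mul_self_of_range_eq (Fin.succ_injective N) (Fin.range_succ N)

end Selection

section EdgeSign

/-- The sign pattern `(-1, 0, …, 0, 1)` on `N + 1` sensors: the diagonal of `J₂ᴴ J₂ - J₁ᴴ J₁`.
For `N = 0` the two edges coincide and cancel. -/
def edgeSign (N : ℕ) : Fin (N + 1) → ℂ := Pi.single (Fin.last N) 1 - Pi.single 0 1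

/-- The sign pattern `edgeSign` on both halves of the augmented array: the diagonal of
`(J₂^{nc})ᴴ J₂^{nc} - (J₁^{nc})ᴴ J₁^{nc}`. -/
def edgeSignNc (N : ℕ) : Fin (N + 1) ⊕ Fin (N + 1) → ℂ := Sum.elim (edgeSign N) (edgeSign N)

theorem edgeSign_comp_rev (N : ℕ) : edgeSign N ∘ Fin.rev = -edgeSign N := by
  ext j
  simp only [edgeSign, Function.comp_apply, Pi.sub_apply, Pi.neg_apply, Pi.single_apply,
    Fin.rev_eq_iff, Fin.rev_last, Fin.rev_zero, neg_sub]

theorem star_edgeSignNc (N : ℕ) : star (edgeSignNc N) = edgeSignNc N := by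
  simp only [edgeSignNc, edgeSign, Function.star_sumElim, star_sub, ← Pi.single_star, star_one]

theorem sum_edgeSignNc (N : ℕ) : ∑ s, edgeSignNc N s = 0 := by
  simp only [edgeSignNc, edgeSign, Fintype.sum_sum_type, Sum.elim_inl, Sum.elim_inr, Pi.sub_apply,
    Finset.sum_sub_distrib, Finset.sum_pi_single', Finset.mem_univ, if_true, sub_self, add_zero]

theorem sum_edgeSignNc_mul_self {N : ℕ} (hN : N ≠ 0) :
    ∑ s, edgeSignNc N s * edgeSignNc N s = 4 := by
  have hne : Fin.last N ≠ 0 := mt Fin.last_eq_zero_iff.mp hN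
  have hsum : ∑ j, edgeSign N j * edgeSign N j = 2 := by
    simp only [edgeSign, Pi.sub_apply, Pi.single_apply, mul_sub, mul_ite, mul_one, mul_zero,
      Finset.sum_sub_distrib, Finset.sum_ite_eq', Finset.mem_univ, if_true, hne, hne.symm,
      if_false]
    norm_num
  simp only [edgeSignNc, Fintype.sum_sum_type, Sum.elim_inl, Sum.elim_inr, hsum]
  norm_num

theorem conjTranspose_J2nc_mul_self_sub_conjTranspose_J1nc_mul_self (N : ℕ) :
    (J2nc (N + 1))ᴴ * J2nc (N + 1) - (J1nc (N + 1))ᴴ * J1nc (N + 1) = diagonal (edgeSignNc N) := by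
  simp only [J1nc_eq_fromBlocks, J2nc_eq_fromBlocks, fromBlocks_conjTranspose, fromBlocks_multiply,
    conjTranspose_zero, Matrix.mul_zero, Matrix.zero_mul, add_zero, zero_add,
    conjTranspose_Jsel1_mul_Jsel1, conjTranspose_Jsel2_mul_Jsel2, fromBlocks_diagonal, diagonal_sub]
  congr 1
  ext (j | j) <;> simp [edgeSignNc, edgeSign]

theorem Pi2M_mul_diagonal_edgeSignNc (N : ℕ) :
    Pi2M (N + 1) * diagonal (edgeSignNc N) = -(diagonal (edgeSignNc N) * Pi2M (N + 1)) := by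
  have h : exchg ℂ (N + 1) * diagonal (edgeSign N) =
      -(diagonal (edgeSign N) * exchg ℂ (N + 1)) := by
    rw [exchg_mul_diagonal, edgeSign_comp_rev, ← Matrix.neg_mul, diagonal_neg]
    rfl
  simp only [Pi2M, edgeSignNc, ← fromBlocks_diagonal, fromBlocks_multiply, h, Matrix.mul_zero,
    Matrix.zero_mul, add_zero, zero_add, fromBlocks_neg, neg_zero]

end EdgeSign

section Steering

theorem Jsel2_mul_avec (N : ℕ) (μ : ℝ) :
    Jsel2 (N + 1) * avec (N + 1) μ = cexp (I * μ) • (Jsel1 (N + 1) * avec (N + 1) μ) := by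
  have h₁ : Jsel1 (N + 1) * avec (N + 1) μ = (avec (N + 1) μ).submatrix Fin.castSucc id := by
    rw [Jsel1_succ_eq_one_submatrix]
    exact one_submatrix_mul Fin.castSucc (Equiv.refl _) (avec (N + 1) μ)
  have h₂ : Jsel2 (N + 1) * avec (N + 1) μ = (avec (N + 1) μ).submatrix Fin.succ id := by
    rw [Jsel2_succ_eq_one_submatrix]
    exact one_submatrix_mul Fin.succ (Equiv.refl _) (avec (N + 1) μ)
  rw [h₁, h₂]
  ext i j
  simp only [avec, submatrix_apply, of_apply, Matrix.smul_apply, smul_eq_mul, ← Complex.exp_add,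
    Fin.val_succ, Fin.val_castSucc]
  congr 1
  push_cast
  ring

theorem exchg_mul_avec_map_conj (N : ℕ) (μ : ℝ) :
    exchg ℂ (N + 1) * (avec (N + 1) μ).map (starRingEnd ℂ) =
      cexp (-(I * N * μ)) • avec (N + 1) μ := by
  ext k j
  have hk : ((k.rev : ℕ) : ℂ) = N - k := by
    rw [Fin.val_rev, Nat.add_sub_add_right, Nat.cast_sub k.is_le]
  simp only [exchg_mul, submatrix_apply, map_apply, avec, of_apply, Matrix.smul_apply, smul_eq_mul,
    ← Complex.exp_conj, ← Complex.exp_add, map_mul, conj_I, conj_ofReal, hk, map_sub,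
    map_natCast]
  congr 1
  ring

theorem J2nc_mul_ancvec (N : ℕ) (μ φ : ℝ) :
    J2nc (N + 1) * ancvec (N + 1) μ φ = cexp (I * μ) • (J1nc (N + 1) * ancvec (N + 1) μ φ) := by
  simp only [J1nc_eq_fromBlocks, J2nc_eq_fromBlocks, ancvec, exchg_mul_avec_map_conj,
    fromBlocks_mul_fromRows, Matrix.mul_smul, Jsel2_mul_avec, Matrix.zero_mul, smul_zero, zero_add,
    add_zero]
  ext (i | i) j
  · rfl
  · simp only [fromRows_apply_inr, Matrix.smul_apply, smul_eq_mul]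
    ring

theorem norm_ancvec_apply (M : ℕ) (μ φ : ℝ) (s : Fin M ⊕ Fin M) : ‖ancvec M μ φ s 0‖ = 1 := by
  cases s <;> simp [ancvec, avec, exchg_mul, norm_exp]

theorem Pi2M_mul_ancvec_map_star (M : ℕ) (μ φ : ℝ) :
    Pi2M M * (ancvec M μ φ).map star = cexp (2 * φ * I) • ancvec M μ φ := by
  have hmap : (ancvec M μ φ).map star = fromRows ((avec M μ).map star)
      (cexp (2 * φ * I) • (exchg ℂ M * avec M μ)) := by
    ext (k | k) j
    · rfl
    · simp [ancvec, exchg_mul, ← Complex.exp_conj, conj_ofNat]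
  rw [hmap, Pi2M, fromBlocks_mul_fromRows, Matrix.mul_smul, exchg_mul_exchg_mul]
  ext (k | k) j
  · simp [ancvec]
  · simp [ancvec, ← mul_assoc, ← Complex.exp_add]

end Steering

section ErrorRow

/-- The error row vector before normalization and projection,
`(a^{nc})ᴴ (J₁^{nc})ᵀ (e^{-iμ} J₂^{nc} - J₁^{nc})`. -/
noncomputable def shiftResidual (M : ℕ) (μ φ : ℝ) : Matrix (Fin 1) (Fin M ⊕ Fin M) ℂ :=
  (ancvec M μ φ)ᴴ * (J1nc M)ᵀ * (cexp (-(I * (μ : ℂ))) • J2nc M - J1nc M)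

theorem shiftResidual_eq (N : ℕ) (μ φ : ℝ) :
    shiftResidual (N + 1) μ φ = (ancvec (N + 1) μ φ)ᴴ * diagonal (edgeSignNc N) := by
  have hstar : star (cexp (I * μ)) = cexp (-(I * μ)) := by
    rw [star_def, ← Complex.exp_conj, map_mul, conj_I, conj_ofReal, neg_mul]
  rw [shiftResidual, ← conjTranspose_J1nc, ← hstar,
    conjTranspose_mul_smul_sub_of_mul_eq_smul (J2nc_mul_ancvec N μ φ),
    conjTranspose_J2nc_mul_self_sub_conjTranspose_J1nc_mul_self]

theorem conjTranspose_shiftResidual (N : ℕ) (μ φ : ℝ) :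
    (shiftResidual (N + 1) μ φ)ᴴ = diagonal (edgeSignNc N) * ancvec (N + 1) μ φ := by
  rw [shiftResidual_eq, conjTranspose_mul, diagonal_conjTranspose, star_edgeSignNc,
    conjTranspose_conjTranspose]

theorem shiftResidual_mul_ancvec (N : ℕ) (μ φ : ℝ) :
    shiftResidual (N + 1) μ φ * ancvec (N + 1) μ φ = 0 := by
  ext i j
  rw [Subsingleton.elim i 0, Subsingleton.elim j 0, shiftResidual_eq,
    conjTranspose_mul_diagonal_mul_apply_of_norm_eq_one (norm_ancvec_apply _ μ φ), sum_edgeSignNc]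
  rfl

theorem shiftResidual_mul_conjTranspose_self_apply {N : ℕ} (hN : N ≠ 0) (μ φ : ℝ) :
    (shiftResidual (N + 1) μ φ * (shiftResidual (N + 1) μ φ)ᴴ) 0 0 = 4 := by
  rw [conjTranspose_shiftResidual, shiftResidual_eq, ← Matrix.mul_assoc,
    Matrix.mul_assoc _ (diagonal _) (diagonal _), diagonal_mul_diagonal,
    conjTranspose_mul_diagonal_mul_apply_of_norm_eq_one (norm_ancvec_apply _ μ φ),
    sum_edgeSignNc_mul_self hN]

theorem Pi2M_mul_transpose_shiftResidual (N : ℕ) (μ φ : ℝ) :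
    Pi2M (N + 1) * (shiftResidual (N + 1) μ φ)ᵀ =
      -cexp (2 * φ * I) • (shiftResidual (N + 1) μ φ)ᴴ := by
  have htranspose : (shiftResidual (N + 1) μ φ)ᵀ =
      diagonal (edgeSignNc N) * (ancvec (N + 1) μ φ).map star := by
    rw [shiftResidual_eq, transpose_mul, diagonal_transpose, conjTranspose_transpose]
  calc
    Pi2M (N + 1) * (shiftResidual (N + 1) μ φ)ᵀ
    _ = Pi2M (N + 1) * diagonal (edgeSignNc N) * (ancvec (N + 1) μ φ).map star := by
      rw [htranspose, Matrix.mul_assoc]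
    _ = -(diagonal (edgeSignNc N) * (Pi2M (N + 1) * (ancvec (N + 1) μ φ).map star)) := by
      rw [Pi2M_mul_diagonal_edgeSignNc, Matrix.neg_mul, Matrix.mul_assoc]
    _ = -cexp (2 * φ * I) • (shiftResidual (N + 1) μ φ)ᴴ := by
      rw [Pi2M_mul_ancvec_map_star, Matrix.mul_smul, conjTranspose_shiftResidual, neg_smul]

theorem vT_eq_smul_shiftResidual (N : ℕ) (μ φ : ℝ) :
    vT (N + 1) μ φ =
      ((√(2 * (N + 1)) / (2 * N) : ℝ) : ℂ) • shiftResidual (N + 1) μ φ := by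
  have hproj : shiftResidual (N + 1) μ φ * Pperp (N + 1) μ φ = shiftResidual (N + 1) μ φ := by
    rw [Pperp, Matrix.mul_sub, Matrix.mul_one, Matrix.mul_smul, ← Matrix.mul_assoc,
      shiftResidual_mul_ancvec, Matrix.zero_mul, smul_zero, sub_zero]
  rw [vT, ← shiftResidual, hproj]
  push_cast
  rw [add_sub_cancel_right]

theorem vT_mul_conjTranspose_self_apply {N : ℕ} (hN : N ≠ 0) (μ φ : ℝ) :
    (vT (N + 1) μ φ * (vT (N + 1) μ φ)ᴴ) 0 0 = ((2 * (N + 1) / N ^ 2 : ℝ) : ℂ) := by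
  have hscale : (√(2 * (N + 1)) / (2 * N)) * (√(2 * (N + 1)) / (2 * N)) * 4 =
      (2 * (N + 1) / N ^ 2 : ℝ) := by
    rw [div_mul_div_comm, Real.mul_self_sqrt (by positivity)]
    field_simp
    ring
  rw [vT_eq_smul_shiftResidual, conjTranspose_smul, Matrix.smul_mul, Matrix.mul_smul,
    Matrix.smul_apply, Matrix.smul_apply, shiftResidual_mul_conjTranspose_self_apply hN, ← hscale]
  simp [mul_assoc]

theorem vT_mul_Pi2M_mul_transpose_self (N : ℕ) (μ φ : ℝ) :
    vT (N + 1) μ φ * Pi2M (N + 1) * (vT (N + 1) μ φ)ᵀ =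
      -cexp (2 * φ * I) • (vT (N + 1) μ φ * (vT (N + 1) μ φ)ᴴ) := by
  have hsymm : Pi2M (N + 1) * (vT (N + 1) μ φ)ᵀ = -cexp (2 * φ * I) • (vT (N + 1) μ φ)ᴴ := by
    rw [vT_eq_smul_shiftResidual, transpose_smul, Matrix.mul_smul, Pi2M_mul_transpose_shiftResidual,
      conjTranspose_smul, star_def, conj_ofReal, smul_comm]
  rw [Matrix.mul_assoc, hsymm, Matrix.mul_smul]

end ErrorRow

/-- for `M ≥ 2` and real `μ, φ`, the row vector `vᵀ` of the
single-source NC ESPRIT error computation satisfies `‖v‖² = 2M/(M − 1)²` and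
`vᵀ Π_{2M} v = −(2M/(M − 1)²) e^{2iφ}`. -/
theorem single_source_error_vector (M : ℕ) (hM : 2 ≤ M) (μ φ : ℝ) :
    (∑ j, Complex.normSq (vT M μ φ 0 j)) = 2 * (M : ℝ) / ((M : ℝ) - 1) ^ 2 ∧
    (vT M μ φ * Pi2M M * (vT M μ φ)ᵀ) 0 0
      = -(2 * (M : ℂ) / ((M : ℂ) - 1) ^ 2) * Complex.exp (2 * (φ : ℂ) * Complex.I) := by
  obtain ⟨N, rfl⟩ : ∃ N, M = N + 1 := ⟨M - 1, by omega⟩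
  have hN : N ≠ 0 := by omega
  have hnorm := vT_mul_conjTranspose_self_apply hN μ φ
  constructor
  · rw [← ofReal_sum_normSq_row, ofReal_inj] at hnorm
    rw [hnorm, Nat.cast_succ, add_sub_cancel_right]
  · rw [vT_mul_Pi2M_mul_transpose_self, Matrix.smul_apply, hnorm]
    push_cast
    rw [add_sub_cancel_right, smul_eq_mul]
    ring
end
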